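/- Let a₁, …, aₙ be vertices of a convex polygon in clockwise order, with distinct pairwise distances sorted decreasingly as d₁ > d₂ > ⋯. Suppose a = a₁, b = a_x, c = a_y, d = a_z with 1 < x ≤ y < z ≤ n, dist(b,c) ≥ d_i and dist(a,d) ≥ d_j. Then min(x − 2, z − y − 1) ≤ i + j − 3; that is, either between a and b or between c and d there are at most i + j − 3 other vertices of the polygon. -/

import Mathlib

/-- The cross product (signed area determinant) of two vectors in the Euclidean plane. -/
noncomputable def cross2 (u v : EuclideanSpace ℝ (Fin 2)) : ℝ := u 0 * v 1 - u 1 * v 0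

/-- The vertices `P 0, P 1, …` form a convex polygon listed in clockwise order. -/
def ClockwiseConvexPos {n : ℕ} (P : Fin n → EuclideanSpace ℝ (Fin 2)) : Prop :=
  ∀ i j k : Fin n, i < j → j < k → cross2 (P j - P i) (P k - P i) < 0

/-!
In a convex quadrilateral `s x y t` some interior angle is not acute. If that angle is at an
endpoint of the side `x y`, then sliding this endpoint along the polygon towards the neighbouring
endpoint of `s t` lengthens `x y`; if it is at an endpoint of `s t`, sliding that endpoint towards
the side `x y` lengthens `s t`. Each one-vertex slide removes at least one distance from those
exceeding the two lengths and shortens one of the arcs from `s` to `x` and from `y` to `t` by one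
edge. When one arc has shrunk to a point, it has lost no more edges than there were distances to
remove. Initially at most `i - 1` distances exceed `d_i` and at most `j - 1` exceed `d_j`.
-/

open scoped RealInnerProductSpace Finset

section Plane

variable {u v w p q r : EuclideanSpace ℝ (Fin 2)}

lemma cross2_self (u : EuclideanSpace ℝ (Fin 2)) : cross2 u u = 0 := by
  simp only [cross2]
  ring

lemma neg_cross2 (u v : EuclideanSpace ℝ (Fin 2)) : -cross2 u v = cross2 v u := by
  simp only [cross2]
  ring

lemma cross2_sub_sub_rotate (p q r : EuclideanSpace ℝ (Fin 2)) :
    cross2 (q - p) (r - p) = cross2 (r - q) (p - q) := by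
  simp only [cross2, PiLp.sub_apply]
  ring

lemma cross2_sub_sub_eq_consecutive (p q r : EuclideanSpace ℝ (Fin 2)) :
    cross2 (q - p) (r - p) = cross2 (q - p) (r - q) := by
  simp only [cross2, PiLp.sub_apply]
  ring

/-- The addition formula for the sine of the angle from `u` to `w` through `v`. -/
lemma cross2_mul_norm_sq (u v w : EuclideanSpace ℝ (Fin 2)) :
    cross2 u w * ‖v‖ ^ 2 = cross2 u v * ⟪v, w⟫ + ⟪u, v⟫ * cross2 v w := by
  simp only [cross2, EuclideanSpace.real_norm_sq_eq, PiLp.inner_apply, Fin.sum_univ_two,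
    RCLike.inner_apply, conj_trivial]
  ring

lemma cross2_pos_of_inner_neg (huv : cross2 u v < 0) (hvw : cross2 v w < 0)
    (iuv : ⟪u, v⟫ < 0) (ivw : ⟪v, w⟫ < 0) : 0 < cross2 u w := by
  refine pos_of_mul_pos_left ?_ (sq_nonneg ‖v‖)
  rw [cross2_mul_norm_sq]
  exact add_pos (mul_pos_of_neg_of_neg huv ivw) (mul_pos_of_neg_of_neg iuv hvw)

lemma inner_nonneg_or_of_cross2_neg {z : EuclideanSpace ℝ (Fin 2)} (huv : cross2 u v < 0)
    (hvw : cross2 v w < 0) (hwz : cross2 w z < 0) (hzu : cross2 z u < 0) :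
    0 ≤ ⟪u, v⟫ ∨ 0 ≤ ⟪v, w⟫ ∨ 0 ≤ ⟪w, z⟫ ∨ 0 ≤ ⟪z, u⟫ := by
  by_contra! ⟨iuv, ivw, iwz, izu⟩
  have huw : 0 < cross2 u w := cross2_pos_of_inner_neg huv hvw iuv ivw
  have hwu : 0 < cross2 w u := cross2_pos_of_inner_neg hwz hzu iwz izu
  linarith [neg_cross2 u w]

lemma inner_sub_sub_nonpos_iff {V : Type*} [NormedAddCommGroup V] [InnerProductSpace ℝ V]
    (a b c : V) : ⟪a - b, c - b⟫ ≤ 0 ↔ 0 ≤ ⟪b - a, c - b⟫ := by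
  rw [← neg_sub b a, inner_neg_left, neg_nonpos]

lemma inner_nonpos_or_of_convex_quadrilateral {a b c e : EuclideanSpace ℝ (Fin 2)}
    (habc : cross2 (b - a) (c - a) < 0) (hbce : cross2 (c - b) (e - b) < 0)
    (hace : cross2 (c - a) (e - a) < 0) (habe : cross2 (b - a) (e - a) < 0) :
    ⟪a - b, c - b⟫ ≤ 0 ∨ ⟪b - c, e - c⟫ ≤ 0 ∨ ⟪c - e, a - e⟫ ≤ 0 ∨ ⟪e - a, b - a⟫ ≤ 0 := by
  simp only [inner_sub_sub_nonpos_iff]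
  apply inner_nonneg_or_of_cross2_neg
  · rwa [← cross2_sub_sub_eq_consecutive]
  · rwa [← cross2_sub_sub_eq_consecutive]
  · rwa [← cross2_sub_sub_eq_consecutive, ← cross2_sub_sub_rotate]
  · rwa [← cross2_sub_sub_eq_consecutive, cross2_sub_sub_rotate]

lemma norm_lt_norm_sub_of_inner_nonpos {V : Type*} [NormedAddCommGroup V] [InnerProductSpace ℝ V]
    {x y : V} (hx : x ≠ 0) (h : ⟪x, y⟫ ≤ 0) : ‖y‖ < ‖x - y‖ := by
  refine lt_of_pow_lt_pow_left₀ 2 (norm_nonneg _) ?_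
  rw [norm_sub_sq_real]
  have : 0 < ‖x‖ ^ 2 := by positivity
  linarith

/-- The sign conditions say that turning from `r` to `p` and on to `q` never changes direction, so
the angle between `q` and `r` is at least the one between `p` and `r`. -/
lemma inner_nonpos_of_cross2_mul (hpq : cross2 p r * cross2 p q ≤ 0)
    (hqr : 0 < cross2 p r * cross2 q r) (h : ⟪p, r⟫ ≤ 0) : ⟪q, r⟫ ≤ 0 := by
  have hpr : 0 < cross2 p r ^ 2 := sq_pos_of_ne_zero (left_ne_zero_of_mul hqr.ne')
  refine nonpos_of_mul_nonpos_right ?_ hpr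
  calc cross2 p r ^ 2 * ⟪q, r⟫
      = cross2 p r * cross2 p q * ‖r‖ ^ 2 + ⟪p, r⟫ * (cross2 p r * cross2 q r) := by
        rw [mul_assoc _ _ (‖r‖ ^ 2), cross2_mul_norm_sq, ← neg_cross2 q r, real_inner_comm r q]
        ring
    _ ≤ 0 := add_nonpos (mul_nonpos_of_nonpos_of_nonneg hpq (sq_nonneg _))
        (mul_nonpos_of_nonpos_of_nonneg h hqr.le)

lemma dist_lt_dist_of_cross2_mul (hpq : cross2 (p - v) (r - v) * cross2 (p - v) (q - v) ≤ 0)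
    (hqr : 0 < cross2 (p - v) (r - v) * cross2 (q - v) (r - v)) (h : ⟪p - v, r - v⟫ ≤ 0) :
    dist v r < dist q r := by
  have hqv : q - v ≠ 0 := by
    intro hqv
    simp [hqv, cross2] at hqr
  rw [dist_comm v r, dist_eq_norm, dist_eq_norm, ← sub_sub_sub_cancel_right q r v]
  exact norm_lt_norm_sub_of_inner_nonpos hqv (inner_nonpos_of_cross2_mul hpq hqr h)

lemma dist_lt_dist_of_clockwise (hqp : cross2 (q - v) (p - v) ≤ 0)
    (hpr : cross2 (p - v) (r - v) < 0) (hqr : cross2 (q - v) (r - v) < 0)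
    (h : ⟪p - v, r - v⟫ ≤ 0) : dist v r < dist q r := by
  refine dist_lt_dist_of_cross2_mul ?_ (mul_pos_of_neg_of_neg hpr hqr) h
  exact mul_nonpos_of_nonpos_of_nonneg hpr.le (by linarith [neg_cross2 (q - v) (p - v)])

lemma dist_lt_dist_of_counterclockwise (hpq : cross2 (p - v) (q - v) ≤ 0)
    (hrp : cross2 (r - v) (p - v) < 0) (hrq : cross2 (r - v) (q - v) < 0)
    (h : ⟪p - v, r - v⟫ ≤ 0) : dist v r < dist q r := by
  rw [← neg_pos, neg_cross2] at hrp hrq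
  exact dist_lt_dist_of_cross2_mul (mul_nonpos_of_nonneg_of_nonpos hrp.le hpq) (mul_pos hrp hrq) h

end Plane

namespace ClockwiseConvexPos

variable {n : ℕ} {P : Fin n → EuclideanSpace ℝ (Fin 2)} {i j k s x y t : Fin n}

lemma cross2_neg_middle (hP : ClockwiseConvexPos P) (hij : i < j) (hjk : j < k) :
    cross2 (P k - P j) (P i - P j) < 0 := by
  rw [← cross2_sub_sub_rotate]
  exact hP i j k hij hjk

lemma cross2_neg_last (hP : ClockwiseConvexPos P) (hij : i < j) (hjk : j < k) :
    cross2 (P i - P k) (P j - P k) < 0 := by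
  rw [← cross2_sub_sub_rotate]
  exact hP.cross2_neg_middle hij hjk

lemma cross2_nonpos_first (hP : ClockwiseConvexPos P) (hij : i < j) (hjk : j ≤ k) :
    cross2 (P j - P i) (P k - P i) ≤ 0 := by
  rcases hjk.eq_or_lt with rfl | hjk
  · exact (cross2_self _).le
  · exact (hP i j k hij hjk).le

lemma cross2_nonpos_last (hP : ClockwiseConvexPos P) (hij : i ≤ j) (hjk : j < k) :
    cross2 (P i - P k) (P j - P k) ≤ 0 := by
  rcases hij.eq_or_lt with rfl | hij
  · exact (cross2_self _).le
  · exact (hP.cross2_neg_last hij hjk).le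

lemma injective (hP : ClockwiseConvexPos P) (hn : 2 < n) : Function.Injective P := by
  intro u v heq
  by_contra! hne
  wlog huv : u < v generalizing u v
  · exact this heq.symm hne.symm (hne.lt_or_gt.resolve_left huv)
  obtain ⟨w, hwu, hwv⟩ := Fin.exists_ne_and_ne_of_two_lt u v hn
  rcases hwu.lt_or_gt with hwu | huw
  · simpa [heq, cross2_self] using hP w u v hwu huv
  rcases hwv.lt_or_gt with hwv | hvw
  · simpa [heq, cross2] using hP u w v huw hwv
  · simpa [heq, cross2] using hP u v w huv hvw

/-- The four alternatives correspond to the non-acute angle being at `x`, `y`, `t`, `s`. -/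
lemma dist_lt_dist_slide_endpoint (hP : ClockwiseConvexPos P) (hsx : s < x) (hxy : x < y)
    (hyt : y < t) :
    (∀ w, s ≤ w → w < x → dist (P x) (P y) < dist (P w) (P y)) ∨
    (∀ w, y < w → w ≤ t → dist (P x) (P y) < dist (P x) (P w)) ∨
    (∀ w, y ≤ w → w < t → dist (P s) (P t) < dist (P s) (P w)) ∨
    (∀ w, s < w → w ≤ x → dist (P s) (P t) < dist (P w) (P t)) := by
  have hsy := hsx.trans hxy
  have hxt := hxy.trans hyt
  refine (inner_nonpos_or_of_convex_quadrilateral (hP s x y hsx hxy) (hP x y t hxy hyt)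
    (hP s y t hsy hyt) (hP s x t hsx hxt)).imp ?_ (Or.imp ?_ (Or.imp ?_ ?_))
  · intro hx w hsw hwx
    exact dist_lt_dist_of_counterclockwise (hP.cross2_nonpos_last hsw hwx)
      (hP.cross2_neg_middle hsx hxy) (hP.cross2_neg_middle hwx hxy) hx
  · intro hy w hyw hwt
    rw [dist_comm, dist_comm (P x)]
    rw [real_inner_comm] at hy
    exact dist_lt_dist_of_clockwise (hP.cross2_nonpos_first hyw hwt)
      (hP.cross2_neg_middle hxy hyt) (hP.cross2_neg_middle hxy hyw) hy
  · intro ht w hyw hwt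
    rw [dist_comm, dist_comm (P s)]
    exact dist_lt_dist_of_counterclockwise (hP.cross2_nonpos_last hyw hwt)
      (hP.cross2_neg_last hsy hyt) (hP.cross2_neg_last (hsy.trans_le hyw) hwt) ht
  · intro hs w hsw hwx
    rw [real_inner_comm] at hs
    exact dist_lt_dist_of_clockwise (hP.cross2_nonpos_first hsw hwx)
      (hP s x t hsx hxt) (hP s w t hsw (hwx.trans_lt hxt)) hs

end ClockwiseConvexPos

section LongerDists

variable {ι X : Type*} [Fintype ι] [PseudoMetricSpace X]

/-- The distinct distances between points of the family `P` that exceed `r`. If `r = d_i` in the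
decreasing enumeration, there are `i - 1` of them. Pairs of equal indices are admitted: they
only contribute the distance `0`, which does not exceed `r` when `0 ≤ r`. -/
noncomputable def longerDists (P : ι → X) (r : ℝ) : Finset ℝ :=
  {δ ∈ Finset.univ.image fun uv : ι × ι ↦ dist (P uv.1) (P uv.2) | r < δ}

variable {P : ι → X} {r δ : ℝ}

lemma mem_longerDists : δ ∈ longerDists P r ↔ (∃ u v, dist (P u) (P v) = δ) ∧ r < δ := by
  simp [longerDists]

lemma card_longerDists_dist_lt {u v : ι} (h : r < dist (P u) (P v)) :
    #(longerDists P (dist (P u) (P v))) < #(longerDists P r) := by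
  have hsub : longerDists P (dist (P u) (P v)) ⊆ longerDists P r := by
    intro δ hδ
    rw [mem_longerDists] at hδ ⊢
    exact ⟨hδ.1, h.trans hδ.2⟩
  have hmem : dist (P u) (P v) ∈ longerDists P r := mem_longerDists.2 ⟨⟨u, v, rfl⟩, h⟩
  have hnotMem : dist (P u) (P v) ∉ longerDists P (dist (P u) (P v)) := fun hδ ↦
    lt_irrefl _ (mem_longerDists.1 hδ).2
  exact Finset.card_lt_card ((Finset.ssubset_iff_of_subset hsub).2 ⟨_, hmem, hnotMem⟩)

lemma card_lt_of_strictAntiOn_of_forall_lt {α : Type*} [Preorder α] {d : ℕ → α} {N i : ℕ}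
    (hd : StrictAntiOn d (Set.Icc 1 N)) (hi : i ∈ Set.Icc 1 N) {S : Finset α}
    (hS : ↑S ⊆ d '' Set.Icc 1 N) (h : ∀ δ ∈ S, d i < δ) : #S < i := by
  have hsurj : Set.SurjOn d (Finset.Ico 1 i) S := by
    intro δ hδ
    obtain ⟨k, hk, rfl⟩ := hS hδ
    exact ⟨k, by simpa using ⟨hk.1, (hd.lt_iff_gt hi hk).1 (h _ hδ)⟩, rfl⟩
  have hcard := Finset.card_le_card_of_surjOn d hsurj
  have := hi.1
  rw [Nat.card_Ico] at hcard
  omega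

lemma card_longerDists_lt {d : ℕ → ℝ} {N i : ℕ} (hanti : StrictAntiOn d (Set.Icc 1 N))
    (hd : ∀ u v : ι, u ≠ v → dist (P u) (P v) ∈ d '' Set.Icc 1 N) (hi : i ∈ Set.Icc 1 N)
    (hr : 0 ≤ r) (hir : d i ≤ r) : #(longerDists P r) < i := by
  refine card_lt_of_strictAntiOn_of_forall_lt hanti hi ?_ fun δ hδ ↦
    hir.trans_lt (mem_longerDists.1 hδ).2
  intro δ hδ
  obtain ⟨⟨u, v, rfl⟩, hlt⟩ := mem_longerDists.1 hδ
  refine hd u v ?_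
  rintro rfl
  exact hlt.not_ge (by simpa using hr)

end LongerDists

theorem ClockwiseConvexPos.min_sub_le_card_longerDists_add {n : ℕ}
    {P : Fin n → EuclideanSpace ℝ (Fin 2)} (hP : ClockwiseConvexPos P) {s x y t : Fin n}
    (hsx : s ≤ x) (hxy : x < y) (hyt : y ≤ t) :
    min (x.val - s.val) (t.val - y.val) ≤
      #(longerDists P (dist (P x) (P y))) + #(longerDists P (dist (P s) (P t))) := by
  induction h : (x.val - s.val) + (t.val - y.val) using Nat.strong_induction_on
    generalizing s x y t with
  | _ m ih =>
  rcases hsx.eq_or_lt with rfl | hsx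
  · simp
  rcases hyt.eq_or_lt with rfl | hyt
  · simp
  rcases hP.dist_lt_dist_slide_endpoint hsx hxy hyt with hx | hy | ht | hs
  · obtain ⟨w, hsw, hwx⟩ := exists_le_covBy_of_lt hsx
    have hcard := card_longerDists_dist_lt (hx w hsw hwx.lt)
    rw [Fin.covBy_iff, Nat.covBy_iff_add_one_eq] at hwx
    have := ih _ (by omega) hsw (by omega) hyt.le rfl
    omega
  · obtain ⟨w, hyw, hwt⟩ := exists_covBy_le_of_lt hyt
    have hcard := card_longerDists_dist_lt (hy w hyw.lt hwt)
    rw [Fin.covBy_iff, Nat.covBy_iff_add_one_eq] at hyw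
    have := ih _ (by omega) hsx.le (by omega : x < w) hwt rfl
    omega
  · obtain ⟨w, hyw, hwt⟩ := exists_le_covBy_of_lt hyt
    have hcard := card_longerDists_dist_lt (ht w hyw hwt.lt)
    rw [Fin.covBy_iff, Nat.covBy_iff_add_one_eq] at hwt
    have := ih _ (by omega) hsx.le hxy hyw rfl
    omega
  · obtain ⟨w, hsw, hwx⟩ := exists_covBy_le_of_lt hsx
    have hcard := card_longerDists_dist_lt (hs w hsw.lt hwx)
    rw [Fin.covBy_iff, Nat.covBy_iff_add_one_eq] at hsw
    have := ih _ (by omega) hwx hxy hyt.le rfl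
    omega

/-- Fact 3: `d 1 > d 2 > ⋯ > d N` enumerates the distinct pairwise distances of the
convex polygon `P`. With `a = P 0, b = P x, c = P y, d = P z` in clockwise order,
if `dist b c ≥ d i` and `dist a d ≥ d j`, then either between `a` and `b` or between
`c` and `d` there are at most `i + j - 3` other vertices (as an inequality over ℤ). -/
theorem stmt7 {n : ℕ} [NeZero n] (P : Fin n → EuclideanSpace ℝ (Fin 2))
    (hP : ClockwiseConvexPos P)
    (d : ℕ → ℝ) (N : ℕ) (hanti : StrictAntiOn d (Set.Icc 1 N))
    (himg : d '' Set.Icc 1 N = {r : ℝ | ∃ u v : Fin n, u ≠ v ∧ dist (P u) (P v) = r})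
    (i j : ℕ) (hi : i ∈ Set.Icc 1 N) (hj : j ∈ Set.Icc 1 N)
    (x y z : Fin n) (hx : 0 < x) (hxy : x ≤ y) (hyz : y < z)
    (hbc : d i ≤ dist (P x) (P y)) (had : d j ≤ dist (P 0) (P z)) :
    min ((x.val : ℤ) - 1) ((z.val : ℤ) - y.val - 1) ≤ (i : ℤ) + j - 3 := by
  have hdist : ∀ u v : Fin n, u ≠ v → dist (P u) (P v) ∈ d '' Set.Icc 1 N := fun u v huv ↦
    himg ▸ ⟨u, v, huv, rfl⟩
  have hxy' : x < y := by
    refine hxy.lt_of_ne fun heq ↦ ?_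
    obtain ⟨u, v, huv, hdi⟩ := himg ▸ Set.mem_image_of_mem d hi
    have hpos : 0 < d i := hdi ▸ dist_pos.2 ((hP.injective (by omega)).ne huv)
    rw [heq, dist_self] at hbc
    exact hpos.not_ge hbc
  have hmin := hP.min_sub_le_card_longerDists_add hx.le hxy' hyz.le
  have hbc_card := card_longerDists_lt hanti hdist hi dist_nonneg hbc
  have had_card := card_longerDists_lt hanti hdist hj dist_nonneg had
  rw [Fin.val_zero] at hmin
  omega
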